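/- There exists a constant C > 0 such that the following holds (Procedure A, Case A of the CATERPILLAR algorithm): for every tree T=(V,E) with n vertices, every valid initial configuration A with |H| ≥ c(T), every pebble p̄ located at vertex r = A(p̄), and every target vertex t ≠ r, if the connected component of T − r containing t contains at least c(T) holes in configuration A, then there exists a plan f with |f| ≤ C·n·c(T) such that ρ(A,f)(p̄) = t. -/

import Mathlib

/-! Only the position of the marked pebble and the set of holes matter (`PMT.Reach`), because a
pebble can be exchanged with a hole along any walk avoiding the marked pebble without changing
the rest of the hole set (`PMT.Reach.transfer`). So the holes of the component of `T - r`
containing `t` can be gathered on the first `c = c(T)` vertices of the path from `r` to `t`, at a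
cost of at most `c * n` (`PMT.Reach.clear`).

If the path `w 0, …, w m` that remains has length at most `c`, the marked pebble slides to `t`.
Otherwise some `w i` with `2 ≤ i ≤ c - 1` is a junction (`PMT.IsSeq.exists_junction`); this is
what the definition of `c(T)` provides. The marked pebble slides to `w i` and steps aside to a
neighbour `u` off the path; pebbles further ahead then move back past `w i` onto
`w 0, …, w (i - 1)` until the marked pebble has `c` holes in front of it on the path
`u, w i, …, w m` (`PMT.Reach.round`). The round costs at most `6 * c * (i - 1)` moves and shortens
the path by `i - 1`, so all rounds together cost at most `6 * c * m` (`PMT.Reach.advance`). -/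

namespace PMT

variable {V P H : Type}

/-- A configuration assigns to each pebble or hole a vertex, bijectively. -/
abbrev Config (P H V : Type) : Type := (P ⊕ H) ≃ V

/- Apply a single move `u → v`: applicable iff `(u,v)` is an edge and the occupant of `v`
is a hole; applying it swaps the occupants of `u` and `v`. -/
open Classical in
noncomputable def applyMove (G : SimpleGraph V) (A : Config P H V) (m : V × V) :
    Option (Config P H V) :=
  if G.Adj m.1 m.2 ∧ (A.symm m.2).isRight = true then
    some (A.trans (Equiv.swap m.1 m.2))
  else
    none

/-- Apply a plan (finite list of moves) in order; defined (`some`) only when each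
successive move is applicable. -/
noncomputable def applyPlan (G : SimpleGraph V) :
    Config P H V → List (V × V) → Option (Config P H V)
  | A, [] => some A
  | A, m :: f => (applyMove G A m).bind fun B => applyPlan G B f

/-- The degree of a vertex (number of neighbors). -/
noncomputable def deg (G : SimpleGraph V) (v : V) : ℕ := (G.neighborSet v).ncard

/-- A corridor: a (nontrivial) path whose endpoints have degree different from 2 and
whose internal vertices all have degree exactly 2. -/
def IsCorridor (G : SimpleGraph V) {a b : V} (p : G.Walk a b) : Prop :=
  p.IsPath ∧ 1 ≤ p.length ∧ deg G a ≠ 2 ∧ deg G b ≠ 2 ∧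
    ∀ x ∈ p.support, x ≠ a → x ≠ b → deg G x = 2

/-- `c₁(T)`: the maximum length of a corridor. -/
noncomputable def c1 (G : SimpleGraph V) : ℕ :=
  sSup {n | ∃ (a b : V) (p : G.Walk a b), IsCorridor G p ∧ p.length = n}

/-- `c₂(T)`: the maximum length of a corridor both of whose endpoints are junctions
(vertices of degree greater than 2); `0` if no such corridor exists. -/
noncomputable def c2 (G : SimpleGraph V) : ℕ :=
  sSup {n | ∃ (a b : V) (p : G.Walk a b),
    IsCorridor G p ∧ 2 < deg G a ∧ 2 < deg G b ∧ p.length = n}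

/-- A path graph: all vertices lie on a single path. -/
def IsPathGraph (G : SimpleGraph V) : Prop :=
  ∃ (a b : V) (p : G.Walk a b), p.IsPath ∧ ∀ x : V, x ∈ p.support

/- The constant `c(T)`: `c₁(T)` if `T` is a path graph,
`max (c₁(T)+1) (c₂(T)+2)` otherwise. -/
open Classical in
noncomputable def cT (G : SimpleGraph V) : ℕ :=
  if IsPathGraph G then c1 G else max (c1 G + 1) (c2 G + 2)

/- The number of holes in the connected component of `T − r` containing `t`. -/
open Classical in
noncomputable def holesInComp (G : SimpleGraph V) [Fintype V]
    (A : Config P H V) (r t : V) : ℕ :=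
  (Finset.univ.filter fun x : V =>
    (∃ q : G.Walk x t, r ∉ q.support) ∧ (A.symm x).isRight = true).card

end PMT

namespace PMT

open Set

/-! ### Reachable states -/

/-- From `A`, a plan of at most `k` moves leads to a configuration in which pebble `pb` is at `x`
and the vertices occupied by holes are exactly those of `S`. The identities of the other pebbles
are forgotten: they play no role in the argument. -/
def Reach {V P H : Type} (G : SimpleGraph V) (A : Config P H V) (pb : P) (k : ℕ) (x : V)
    (S : Set V) : Prop :=
  ∃ (f : List (V × V)) (B : Config P H V), applyPlan G A f = some B ∧ f.length ≤ k ∧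
    B (Sum.inl pb) = x ∧ ∀ v, (B.symm v).isRight = true ↔ v ∈ S

section reach

variable {V P H : Type} {G : SimpleGraph V} {A : Config P H V} {pb : P}

theorem applyPlan_append (A B : Config P H V) (f g : List (V × V))
    (h : applyPlan G A f = some B) : applyPlan G A (f ++ g) = applyPlan G B g := by
  induction f generalizing A with
  | nil => simp only [applyPlan, Option.some.injEq] at h; simp [h]
  | cons m f ih =>
    simp only [applyPlan, List.cons_append] at h ⊢
    cases hm : applyMove G A m with
    | none => simp [hm] at h
    | some A' =>
      rw [hm] at h
      simpa using ih A' (by simpa using h)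

theorem Reach.mono {k l : ℕ} {x : V} {S : Set V} (h : Reach G A pb k x S) (hkl : k ≤ l) :
    Reach G A pb l x S := by
  obtain ⟨f, B, h1, h2, h3⟩ := h
  exact ⟨f, B, h1, h2.trans hkl, h3⟩

theorem Reach.notMem {k : ℕ} {x : V} {S : Set V} (h : Reach G A pb k x S) : x ∉ S := by
  obtain ⟨f, B, h1, h2, h3, h4⟩ := h
  rw [← h4, ← h3]
  simp

open Classical in
theorem swap_isRight_iff {B : Config P H V} {S : Set V} {u v : V}
    (h4 : ∀ v, (B.symm v).isRight = true ↔ v ∈ S) (hu : u ∉ S) (hv : v ∈ S) (y : V) :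
    ((B.trans (Equiv.swap u v)).symm y).isRight = true ↔ y ∈ insert u (S \ {v}) := by
  have huv : u ≠ v := fun h => hu (h ▸ hv)
  rw [Equiv.symm_trans_apply, Equiv.symm_swap, h4]
  by_cases h1 : y = u
  · subst h1; simp [hv]
  · by_cases h2 : y = v
    · subst h2; simp [hu, huv.symm]
    · rw [Equiv.swap_apply_of_ne_of_ne h1 h2]; simp [h1, h2]

open Classical in
theorem Reach.move {k : ℕ} {x : V} {S : Set V} (h : Reach G A pb k x S) {u v : V}
    (huv : G.Adj u v) (hu : u ∉ S) (hv : v ∈ S) :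
    Reach G A pb (k + 1) (Equiv.swap u v x) (insert u (S \ {v})) := by
  obtain ⟨f, B, h1, h2, h3, h4⟩ := h
  refine ⟨f ++ [(u, v)], B.trans (Equiv.swap u v), ?_, by simpa using h2, by simp [h3],
    swap_isRight_iff h4 hu hv⟩
  rw [applyPlan_append _ _ _ _ h1]
  simp [applyPlan, applyMove, huv, (h4 v).2 hv]

theorem Reach.move_other {k : ℕ} {x : V} {S : Set V} (h : Reach G A pb k x S) {u v : V}
    (huv : G.Adj u v) (hu : u ∉ S) (hv : v ∈ S) (hxu : x ≠ u) :
    Reach G A pb (k + 1) x (insert u (S \ {v})) := by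
  classical
  have h1 := h.move huv hu hv
  rwa [Equiv.swap_apply_of_ne_of_ne hxu fun e => h.notMem (e ▸ hv)] at h1

theorem Reach.move_marked {k : ℕ} {x : V} {S : Set V} (h : Reach G A pb k x S) {v : V}
    (hxv : G.Adj x v) (hv : v ∈ S) : Reach G A pb (k + 1) v (insert x (S \ {v})) := by
  classical
  have h1 := h.move hxv h.notMem hv
  rwa [Equiv.swap_apply_left] at h1

/-- Along any walk that avoids the marked pebble, a pebble at the start can be exchanged, as far
as the set of holes is concerned, with a hole at the end: if the next vertex is a hole, step onto
it and continue from there; otherwise clear the next vertex first and then step onto it. -/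
theorem Reach.transfer {a b : V} (q : G.Walk a b) {k : ℕ} {x : V} {S : Set V}
    (h : Reach G A pb k x S) (hx : x ∉ q.support) (ha : a ∉ S) (hb : b ∈ S) :
    Reach G A pb (k + q.length) x (insert a (S \ {b})) := by
  induction q generalizing k S with
  | nil => exact absurd hb ha
  | @cons a y b hay q ih =>
    simp only [SimpleGraph.Walk.support_cons, List.mem_cons, not_or] at hx
    have hne : a ≠ b := fun e => ha (e ▸ hb)
    have hya := hay.ne
    rw [SimpleGraph.Walk.length_cons]
    by_cases hy : y ∈ S
    · have h1 := h.move_other hay ha hy hx.1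
      by_cases hyb : y = b
      · subst hyb
        exact h1.mono (by omega)
      · have h2 := ih h1 hx.2 (by simp [hya.symm]) (by simp [hb, Ne.symm hyb])
        have e : insert y (insert a (S \ {y}) \ {b}) = insert a (S \ {b}) := by
          ext z; simp only [mem_insert_iff, mem_sdiff, mem_singleton_iff]; grind
        rw [e] at h2
        exact h2.mono (by omega)
    · have h1 := ih h hx.2 hy hb
      have h2 := h1.move_other hay (by simp [hya, ha]) (by simp) hx.1
      have e : insert a (insert y (S \ {b}) \ {y}) = insert a (S \ {b}) := by
        ext z; simp only [mem_insert_iff, mem_sdiff, mem_singleton_iff]; grind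
      rw [e] at h2
      exact h2.mono (by omega)

/-- If a region `D`, whose vertices are mutually reachable around the marked pebble within `l`
steps, has at least as many holes as `K ⊆ D` has vertices, then `K` can be emptied by one
transfer for each of its pebbles. -/
theorem Reach.clear [Finite V] {D K : Set V} {x : V} {l : ℕ} (hKD : K ⊆ D)
    (hD : ∀ a ∈ D, ∀ b ∈ D, ∃ q : G.Walk a b, x ∉ q.support ∧ q.length ≤ l)
    (N : ℕ) {k : ℕ} {S : Set V} (h : Reach G A pb k x S)
    (hN : (K \ S).ncard ≤ N) (hK : K.ncard ≤ (S ∩ D).ncard) :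
    ∃ S', Reach G A pb (k + N * l) x S' ∧ K ⊆ S' := by
  induction N generalizing k S with
  | zero =>
    refine ⟨S, h.mono (by omega), ?_⟩
    have := (Set.ncard_eq_zero (Set.toFinite _)).1 (Nat.le_zero.1 hN)
    exact Set.sdiff_eq_empty.1 this
  | succ N ih =>
    by_cases hKS : K ⊆ S
    · exact ⟨S, h.mono (by omega), hKS⟩
    · obtain ⟨a, haK, haS⟩ := Set.not_subset.1 hKS
      obtain ⟨b, hb, hbK⟩ : ∃ b ∈ S ∩ D, b ∉ K := by
        by_contra! hcon
        have : (S ∩ D).ncard < K.ncard :=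
          Set.ncard_lt_ncard ⟨hcon, fun hh => haS (hh haK).1⟩ (Set.toFinite _)
        omega
      obtain ⟨q, hq, hql⟩ := hD a (hKD haK) b hb.2
      have h1 := (h.transfer q hq haS hb.1).mono (show _ ≤ k + l by omega)
      have e1 : K \ insert a (S \ {b}) = (K \ S) \ {a} := by
        ext z; simp only [mem_insert_iff, mem_sdiff, mem_singleton_iff]; grind
      have e2 : insert a (S \ {b}) ∩ D = insert a ((S ∩ D) \ {b}) := by
        have := hKD haK
        ext z; simp only [mem_insert_iff, mem_sdiff, mem_singleton_iff, mem_inter_iff]; grind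
      obtain ⟨S', hS', hKS'⟩ := ih h1
        (by rw [e1, Set.ncard_sdiff_singleton_of_mem (Set.mem_sdiff _ |>.2 ⟨haK, haS⟩)]; omega)
        (by
          rw [e2, Set.ncard_insert_of_notMem (by simp [haS]),
            Set.ncard_sdiff_singleton_of_mem hb]
          omega)
      exact ⟨S', hS'.mono (by rw [Nat.succ_mul]; omega), hKS'⟩

end reach

/-! ### Injective vertex sequences -/

/-- The vertices `w 0, …, w m` form a path of length `m` in `G`; the values `w j` with `m < j`
are irrelevant. -/
structure IsSeq {V : Type} (G : SimpleGraph V) (w : ℕ → V) (m : ℕ) : Prop where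
  adj : ∀ j < m, G.Adj (w j) (w (j + 1))
  inj : ∀ i ≤ m, ∀ j ≤ m, w i = w j → i = j

/-- Prepend a vertex to a sequence. -/
def consSeq {V : Type} (u : V) (w : ℕ → V) : ℕ → V
  | 0 => u
  | j + 1 => w j

section seq

variable {V : Type} {G : SimpleGraph V}

theorem IsSeq.shift {w : ℕ → V} {m : ℕ} (h : IsSeq G w m) {i l : ℕ} (hil : i + l ≤ m) :
    IsSeq G (fun j => w (i + j)) l :=
  ⟨fun j hj => h.adj (i + j) (by omega), fun a ha b hb hab => by
    have := h.inj (i + a) (by omega) (i + b) (by omega) hab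
    omega⟩

theorem IsSeq.rev {w : ℕ → V} {m : ℕ} (h : IsSeq G w m) : IsSeq G (fun j => w (m - j)) m :=
  ⟨fun j hj => by
    have := (h.adj (m - (j + 1)) (by omega)).symm
    rwa [show m - (j + 1) + 1 = m - j by omega] at this,
   fun a ha b hb hab => by
    have := h.inj (m - a) (by omega) (m - b) (by omega) hab
    omega⟩

theorem IsSeq.walk {w : ℕ → V} {l : ℕ} (h : IsSeq G w l) :
    ∃ q : G.Walk (w 0) (w l), q.length = l ∧ q.IsPath ∧
      ∀ x, x ∈ q.support → ∃ j ≤ l, x = w j := by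
  induction l generalizing w with
  | zero => exact ⟨.nil, rfl, .nil, fun x hx => ⟨0, le_rfl, by simpa using hx⟩⟩
  | succ l ih =>
    have hs : IsSeq G (fun j => w (j + 1)) l := by
      simpa [add_comm] using h.shift (i := 1) (l := l) (by omega)
    obtain ⟨q, h1, h2, h3⟩ := ih hs
    refine ⟨.cons (h.adj 0 (by omega)) q, by simp [h1], ?_, ?_⟩
    · refine h2.cons fun hmem => ?_
      obtain ⟨j, hj, e⟩ := h3 _ hmem
      have := h.inj 0 (by omega) (j + 1) (by omega) e
      omega
    · intro x hx
      rw [SimpleGraph.Walk.support_cons, List.mem_cons] at hx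
      rcases hx with rfl | hx
      · exact ⟨0, by omega, rfl⟩
      · obtain ⟨j, hj, e⟩ := h3 _ hx
        exact ⟨j + 1, by omega, e⟩

theorem IsSeq.walk_between {w : ℕ → V} {m : ℕ} (h : IsSeq G w m) {a b : ℕ} (ha : a ≤ m)
    (hb : b ≤ m) : ∃ q : G.Walk (w a) (w b), q.length ≤ m ∧
      ∀ x, x ∈ q.support → ∃ j ≤ m, x = w j := by
  wlog hab : a ≤ b generalizing a b
  · obtain ⟨q, h1, h2⟩ := this hb ha (by omega)
    exact ⟨q.reverse, by simpa using h1, fun x hx => h2 x (by simpa using hx)⟩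
  · obtain ⟨d, rfl⟩ := Nat.exists_eq_add_of_le hab
    obtain ⟨q, h1, -, h3⟩ := (h.shift hb).walk
    refine ⟨q, by omega, fun x hx => ?_⟩
    obtain ⟨j, hj, e⟩ := h3 x hx
    exact ⟨a + j, by omega, e⟩

theorem IsSeq.length_lt [Fintype V] {w : ℕ → V} {m : ℕ} (h : IsSeq G w m) :
    m < Fintype.card V := by
  obtain ⟨q, h1, h2, -⟩ := h.walk
  exact h1 ▸ h2.length_lt

/-- A path in an acyclic graph has no chords. -/
theorem IsSeq.chord (hG : G.IsAcyclic) {w : ℕ → V} {m : ℕ} (h : IsSeq G w m) {a b : ℕ}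
    (ha : a ≤ m) (hb : b ≤ m) (hadj : G.Adj (w a) (w b)) : a + 1 = b ∨ b + 1 = a := by
  wlog hab : a ≤ b generalizing a b
  · exact (this hb ha hadj.symm (by omega)).symm
  · obtain ⟨d, rfl⟩ := Nat.exists_eq_add_of_le hab
    obtain ⟨q, h1, h2, -⟩ := (h.shift hb).walk
    have hp : (SimpleGraph.Walk.cons hadj .nil).IsPath := by simpa using hadj.ne
    have := congrArg (fun p : G.Path _ _ => p.1.length)
      ((hG.subsingleton_path _ _).elim ⟨q, h2⟩ ⟨_, hp⟩)
    simp [h1] at this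
    omega

theorem IsSeq.cons {w : ℕ → V} {m : ℕ} (h : IsSeq G w m) {u : V}
    (hu : G.Adj u (w 0)) (hne : ∀ j ≤ m, w j ≠ u) : IsSeq G (consSeq u w) (m + 1) := by
  refine ⟨?_, ?_⟩
  · rintro (_ | j) hj
    · exact hu
    · exact h.adj j (by omega)
  · rintro (_ | i) hi (_ | j) hj e
    · rfl
    · exact absurd e.symm (hne j (by omega))
    · exact absurd e (hne i (by omega))
    · rw [h.inj i (by omega) j (by omega) e]

/-! ### Degrees and corridors -/

theorem ncard_pair_le (a b : V) : ({a, b} : Set V).ncard ≤ 2 :=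
  (Set.ncard_insert_le _ _).trans (by rw [Set.ncard_singleton])

theorem IsSeq.two_le_deg [Finite V] {w : ℕ → V} {m : ℕ} (h : IsSeq G w m) {j : ℕ} (h1 : 1 ≤ j)
    (h2 : j < m) : 2 ≤ deg G (w j) := by
  have hne : w (j - 1) ≠ w (j + 1) := fun e => by
    have := h.inj (j - 1) (by omega) (j + 1) (by omega) e
    omega
  rw [deg, ← Set.ncard_pair hne]
  refine Set.ncard_le_ncard ?_ (Set.toFinite _)
  have := h.adj (j - 1) (by omega)
  rw [Nat.sub_add_cancel h1] at this
  rintro x (rfl | rfl)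
  · exact this.symm
  · exact h.adj j h2

theorem IsSeq.exists_extend [Finite V] (hG : G.IsAcyclic) {w : ℕ → V} {l : ℕ} (h : IsSeq G w l)
    (h0 : deg G (w 0) = 2) (hint : ∀ j, 0 < j → j < l → deg G (w j) = 2) :
    ∃ w', IsSeq G w' (l + 1) ∧ ∀ j, 0 < j → j < l + 1 → deg G (w' j) = 2 := by
  obtain ⟨u, hu, hne⟩ : ∃ u ∈ G.neighborSet (w 0), u ∉ ({w 1} : Set V) :=
    Set.exists_mem_notMem_of_ncard_lt_ncard (by rw [Set.ncard_singleton]; unfold deg at h0; omega)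
  rw [SimpleGraph.mem_neighborSet] at hu
  refine ⟨consSeq u w, h.cons hu.symm ?_, ?_⟩
  · rintro j hj rfl
    rcases h.chord hG (by omega) hj hu with e | e
    · exact hne (by simp [← e])
    · omega
  · rintro (_ | _ | j) h1 h2
    · omega
    · exact h0
    · exact hint _ (by omega) (by omega)

theorem IsSeq.isCorridor {w : ℕ → V} {l : ℕ} (h : IsSeq G w l) (hl : 1 ≤ l)
    (h0 : deg G (w 0) ≠ 2) (h1 : deg G (w l) ≠ 2)
    (hint : ∀ j, 0 < j → j < l → deg G (w j) = 2) :
    ∃ p : G.Walk (w 0) (w l), IsCorridor G p ∧ p.length = l := by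
  obtain ⟨q, hq, hp, hs⟩ := h.walk
  refine ⟨q, ⟨hp, by omega, h0, h1, fun x hx hx0 hxl => ?_⟩, hq⟩
  obtain ⟨j, hj, rfl⟩ := hs x hx
  refine hint j (Nat.pos_of_ne_zero ?_) (lt_of_le_of_ne hj ?_)
  · rintro rfl; exact hx0 rfl
  · rintro rfl; exact hxl rfl

/-- A path with internal vertices of degree `2` extends to a corridor, hence has length at most
`c1`. -/
theorem IsSeq.le_c1 [Fintype V] (hG : G.IsAcyclic) {w : ℕ → V} {l : ℕ} (h : IsSeq G w l)
    (hl : 1 ≤ l) (hint : ∀ j, 0 < j → j < l → deg G (w j) = 2) : l ≤ c1 G := by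
  obtain ⟨N, hN⟩ : ∃ N, Fintype.card V ≤ l + N := ⟨Fintype.card V, by omega⟩
  induction N generalizing w l with
  | zero => have := h.length_lt; omega
  | succ N ih =>
    by_cases h0 : deg G (w 0) = 2
    · obtain ⟨w', h1, h2⟩ := h.exists_extend hG h0 hint
      have := ih h1 (by omega) h2 (by omega)
      omega
    by_cases hL : deg G (w l) = 2
    · obtain ⟨w', h1, h2⟩ := h.rev.exists_extend hG (by simpa using hL)
        (fun j h1 h2 => hint _ (by omega) (by omega))
      have := ih h1 (by omega) h2 (by omega)
      omega
    · refine le_csSup ⟨Fintype.card V, ?_⟩ ?_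
      · rintro n ⟨a, b, p, hp, rfl⟩
        exact hp.1.length_lt.le
      · exact ⟨_, _, h.isCorridor hl h0 hL hint⟩

theorem IsSeq.le_c2 [Fintype V] {w : ℕ → V} {l : ℕ} (h : IsSeq G w l) (hl : 1 ≤ l)
    (h0 : 2 < deg G (w 0)) (h1 : 2 < deg G (w l))
    (hint : ∀ j, 0 < j → j < l → deg G (w j) = 2) : l ≤ c2 G := by
  obtain ⟨p, hp, hpl⟩ := h.isCorridor hl (by omega) (by omega) hint
  refine le_csSup ⟨Fintype.card V, ?_⟩ ⟨_, _, p, hp, h0, h1, hpl⟩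
  rintro n ⟨a, b, p, hp, -, -, rfl⟩
  exact hp.1.length_lt.le

theorem isSeq_getVert {a b : V} {p : G.Walk a b} (hp : p.IsPath) :
    IsSeq G p.getVert p.length :=
  ⟨fun _ hj => p.adj_getVert_succ hj, fun _ hi _ hj e => hp.getVert_injOn hi hj e⟩

/-- In a path graph no path is longer than `c(T)`, since the whole graph is one corridor. -/
theorem IsSeq.le_cT_of_isPathGraph [Fintype V] (hG : G.IsAcyclic) (hP : IsPathGraph G)
    {w : ℕ → V} {m : ℕ} (h : IsSeq G w m) : m ≤ cT G := by
  rw [cT, if_pos hP]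
  obtain ⟨a, b, p, hp, hall⟩ := hP
  have hs := isSeq_getVert hp
  have hcard : Fintype.card V ≤ p.length + 1 := by
    classical
    rw [← SimpleGraph.Walk.length_support, ← Finset.card_univ]
    refine le_trans (Finset.card_le_card fun x _ => ?_) p.support.toFinset_card_le
    simpa using hall x
  have hm := h.length_lt
  rcases Nat.eq_zero_or_pos p.length with h0 | h0
  · omega
  refine le_trans (show m ≤ p.length by omega) (hs.le_c1 hG h0 fun j h1 h2 => ?_)
  refine le_antisymm ?_ (hs.two_le_deg h1 h2)
  refine le_trans (Set.ncard_le_ncard (t := {p.getVert (j - 1), p.getVert (j + 1)}) ?_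
    (Set.toFinite _)) (ncard_pair_le _ _)
  intro y hy
  obtain ⟨i, rfl, hi⟩ := SimpleGraph.Walk.mem_support_iff_exists_getVert.1 (hall y)
  rcases hs.chord hG h2.le hi hy with rfl | rfl
  · exact Or.inr rfl
  · exact Or.inl rfl

/-- Any path longer than `c(T)` has a junction at a position between `2` and `c(T) - 1`. If `w 1`
has degree `2`, the bound `c₁ + 1 ≤ c(T)` forces this; if `w 1` is a junction, a missing junction
would give a corridor of length at least `c(T) - 1` starting at `w 1`, which `c₂ + 2 ≤ c(T)`
excludes when it ends at `w (c(T))`, and `c₁ + 1 ≤ c(T)` when it is longer. -/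
theorem IsSeq.exists_junction [Fintype V] (hG : G.IsAcyclic) {w : ℕ → V} {m : ℕ}
    (h : IsSeq G w m) (hm : cT G < m) : ∃ i, 2 ≤ i ∧ i + 1 ≤ cT G ∧ 2 < deg G (w i) := by
  have hP : ¬ IsPathGraph G := fun hP => by
    have := h.le_cT_of_isPathGraph hG hP
    omega
  have hc : cT G = max (c1 G + 1) (c2 G + 2) := by rw [cT, if_neg hP]
  generalize cT G = c at hm hc ⊢
  have hc1 : c1 G + 1 ≤ c := by omega
  have hc2 : c2 G + 2 ≤ c := by omega
  by_contra! hcon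
  have hdeg : ∀ i, 2 ≤ i → i + 1 ≤ c → deg G (w i) = 2 := fun i h1 h2 =>
    le_antisymm (hcon i h1 h2) (h.two_le_deg (by omega) (by omega))
  have hd1 := h.two_le_deg (j := 1) le_rfl (by omega)
  have hdc := h.two_le_deg (j := c) (by omega) hm
  rcases Nat.eq_or_lt_of_le hd1 with e1 | e1
  · have hs : IsSeq G w c := by simpa using h.shift (i := 0) (l := c) (by omega)
    have := hs.le_c1 hG (by omega) fun j h1 h2 => by
      rcases Nat.eq_or_lt_of_le h1 with rfl | h1
      · exact e1.symm
      · exact hdeg j h1 h2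
    omega
  rcases Nat.eq_or_lt_of_le hdc with e2 | e2
  · have := (h.shift (i := 1) (l := c) (by omega)).le_c1 hG (by omega) fun j h1 h2 => by
      rcases Nat.eq_or_lt_of_le (show 1 + j ≤ c by omega) with h3 | h3
      · rw [h3]; exact e2.symm
      · exact hdeg _ (by omega) (by omega)
    omega
  · have := (h.shift (i := 1) (l := c - 1) (by omega)).le_c2 (by omega) e1
      (by rwa [show 1 + (c - 1) = c by omega]) fun j h1 h2 => hdeg _ (by omega) (by omega)
    omega

end seq

/-! ### Advancing the marked pebble -/

section advance

variable {V P H : Type} {G : SimpleGraph V} {A : Config P H V} {pb : P}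

theorem Reach.slide {w : ℕ → V} {l k : ℕ} {S : Set V} (hw : IsSeq G w l)
    (h : Reach G A pb k (w 0) S) (hS : ∀ j, 1 ≤ j → j ≤ l → w j ∈ S) :
    Reach G A pb (k + l) (w l) (insert (w 0) S \ {w l}) := by
  induction l with
  | zero =>
    have e : insert (w 0) S \ {w 0} = S := by simp [h.notMem]
    rwa [e]
  | succ l ih =>
    have hs : IsSeq G w l := by simpa using hw.shift (i := 0) (l := l) (by omega)
    have h1 := ih hs fun j h1 h2 => hS j h1 (by omega)
    have hadj := hw.adj l (by omega)
    have h2 := h1.move_marked hadj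
      (by simp [hS (l + 1) (by omega) le_rfl, hadj.ne.symm])
    have e : insert (w l) ((insert (w 0) S \ {w l}) \ {w (l + 1)}) =
        insert (w 0) S \ {w (l + 1)} := by
      have hl : w l ∈ insert (w 0) S := by
        rcases Nat.eq_zero_or_pos l with rfl | hl
        · simp
        · exact Or.inr (hS l hl (by omega))
      have := hadj.ne
      ext z; simp only [mem_insert_iff, mem_sdiff, mem_singleton_iff] at *; grind
    rw [e] at h2
    exact h2.mono (by omega)

/-- One round: the marked pebble at `w 0` with `c` holes in front of it passes to a neighbour `u`,
off the path, of the junction `w i`; the pebbles beyond the window of holes are then let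
past it onto `w 0, …, w (i - 1)`, so that again `c` holes (or as many as there are vertices) lie
in front of it on the path `u, w i, …, w m`. -/
theorem Reach.round [Finite V] {w : ℕ → V} {m c i k : ℕ} {S : Set V} {u : V} (hw : IsSeq G w m)
    (h : Reach G A pb k (w 0) S) (hS : ∀ j, 1 ≤ j → j ≤ c → w j ∈ S)
    (hi : 2 ≤ i) (hic : i + 1 ≤ c) (hcm : c < m) (hu : G.Adj (w i) u)
    (huw : ∀ j ≤ m, w j ≠ u) :
    ∃ S', Reach G A pb (k + 6 * c * (i - 1)) u S' ∧
      ∀ j, i ≤ j → j ≤ i + c - 1 → j ≤ m → w j ∈ S' := by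
  have hne : ∀ a b, a ≤ m → b ≤ m → a ≠ b → w a ≠ w b := fun a b ha hb hab e =>
    hab (hw.inj a ha b hb e)
  -- If `u` carries a pebble, it is sent to the far end `w c` of the window.
  obtain ⟨S1, h1, hu1, hS1⟩ : ∃ S1, Reach G A pb (k + c) (w 0) S1 ∧ u ∈ S1 ∧
      ∀ j, 1 ≤ j → j < c → w j ∈ S1 := by
    by_cases hus : u ∈ S
    · exact ⟨S, h.mono (by omega), hus, fun j h1 h2 => hS j h1 (by omega)⟩
    · obtain ⟨d, rfl⟩ := Nat.exists_eq_add_of_le (show i ≤ c by omega)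
      obtain ⟨q, hq1, -, hq3⟩ := (hw.shift (i := i) (l := d) (by omega)).walk
      have h1 := h.transfer (SimpleGraph.Walk.cons hu.symm q) ?_ hus (hS (i + d) (by omega) le_rfl)
      · refine ⟨_, h1.mono ?_, by simp, fun j h1 h2 => Or.inr ⟨hS j h1 h2.le, ?_⟩⟩
        · rw [SimpleGraph.Walk.length_cons]; omega
        · exact hne _ _ (by omega) (by omega) (by omega)
      · rw [SimpleGraph.Walk.support_cons, List.mem_cons, not_or]
        refine ⟨huw 0 (by omega), fun hmem => ?_⟩
        obtain ⟨j, hj, e⟩ := hq3 _ hmem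
        exact hne 0 (i + j) (by omega) (by omega) (by omega) e
  have hwi : IsSeq G w i := by simpa using hw.shift (i := 0) (l := i) (by omega)
  have h2 := Reach.slide hwi h1 fun j h1 h2 => hS1 j h1 (by omega)
  have h3 := h2.move_marked hu (by simp [hu1, (huw i (by omega)).symm])
  generalize hS3 : insert (w i) ((insert (w 0) S1 \ {w i}) \ {u}) = S3 at h3
  have hS3 : ∀ j < c, w j ∈ S3 := by
    intro j hj
    rw [← hS3]
    have hju := huw j (by omega)
    rcases Nat.eq_zero_or_pos j with rfl | hj0
    · exact Or.inr ⟨⟨by simp, hne _ _ (by omega) (by omega) (by omega)⟩, hju⟩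
    · by_cases e : w j = w i
      · exact Or.inl e
      · exact Or.inr ⟨⟨Or.inr (hS1 j hj0 hj), e⟩, hju⟩
  obtain ⟨M, hM⟩ : ∃ M, M = min (i + c - 1) m := ⟨_, rfl⟩
  have hwM : IsSeq G w M := by simpa using hw.shift (i := 0) (l := M) (by omega)
  -- Of the vertices `w i, …, w M` to be emptied, only those from `w c` on can carry pebbles.
  obtain ⟨S', h4, hS'⟩ := Reach.clear (D := w '' Set.Iic M) (K := w '' Set.Icc i M) (l := M)
    (Set.image_mono fun j hj => hj.2)
    (by
      rintro _ ⟨a, ha, rfl⟩ _ ⟨b, hb, rfl⟩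
      obtain ⟨q, hq1, hq2⟩ := hwM.walk_between ha hb
      refine ⟨q, fun hmem => ?_, hq1⟩
      obtain ⟨j, hj, e⟩ := hq2 _ hmem
      exact huw j (by omega) e.symm) i h3
    (by
      have hsub : w '' Set.Icc i M \ S3 ⊆ w '' Set.Icc c M := by
        rintro _ ⟨⟨j, hj, rfl⟩, hj'⟩
        exact ⟨j, ⟨not_lt.1 fun hlt => hj' (hS3 j hlt), hj.2⟩, rfl⟩
      refine (Set.ncard_le_ncard hsub (Set.toFinite _)).trans
        ((Set.ncard_image_le (Set.finite_Icc c M)).trans ?_)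
      rw [← Finset.coe_Icc, Set.ncard_coe_finset, Nat.card_Icc]
      omega)
    (by
      have hsub : w '' Set.Iio c ⊆ S3 ∩ w '' Set.Iic M := by
        rintro _ ⟨j, hj, rfl⟩
        rw [Set.mem_Iio] at hj
        exact ⟨hS3 j hj, j, by rw [Set.mem_Iic]; omega, rfl⟩
      refine le_trans ?_ (Set.ncard_le_ncard hsub (Set.toFinite _))
      rw [Set.InjOn.ncard_image (s := Set.Iio c)]
      · refine (Set.ncard_image_le (Set.finite_Icc i M)).trans ?_
        rw [← Finset.coe_Icc, Set.ncard_coe_finset, Nat.card_Icc, ← Finset.coe_Iio,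
          Set.ncard_coe_finset, Nat.card_Iio]
        omega
      · intro a ha b hb e
        rw [Set.mem_Iio] at ha hb
        exact hw.inj a (by omega) b (by omega) e)
  refine ⟨S', h4.mono ?_, fun j h1 h2 h3 => hS' ⟨j, ⟨h1, by omega⟩, rfl⟩⟩
  -- `c + i + 1 + i * M ≤ 2 * c * (i + 1) ≤ 6 * c * (i - 1)`, using `M ≤ 2 * c` and `2 ≤ i`.
  obtain ⟨d, rfl⟩ := Nat.exists_eq_add_of_le hi
  have hMc : M ≤ 2 * c := by omega
  have := Nat.mul_le_mul_left (2 + d) hMc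
  have e : 2 + d - 1 = d + 1 := by omega
  rw [e]
  nlinarith

/-- With `c(T)` holes in front of it, the marked pebble can be brought to the end of the path;
a round that ends at `w i` shortens the path by `i - 1`, which pays for its cost. -/
theorem Reach.advance [Fintype V] (hG : G.IsAcyclic) (m : ℕ) {w : ℕ → V} {k : ℕ} {S : Set V}
    (hw : IsSeq G w m) (h : Reach G A pb k (w 0) S)
    (hS : ∀ j, 1 ≤ j → j ≤ cT G → j ≤ m → w j ∈ S) :
    ∃ S', Reach G A pb (k + 6 * cT G * m) (w m) S' := by
  induction m using Nat.strong_induction_on generalizing w k S with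
  | _ m ih =>
    rcases Nat.lt_or_ge (cT G) m with hm | hm
    · obtain ⟨i, hi, hic, hdeg⟩ := hw.exists_junction hG hm
      obtain ⟨u, hu, hne⟩ :
          ∃ u ∈ G.neighborSet (w i), u ∉ ({w (i - 1), w (i + 1)} : Set V) :=
        Set.exists_mem_notMem_of_ncard_lt_ncard
          (lt_of_le_of_lt (ncard_pair_le _ _) hdeg)
      rw [SimpleGraph.mem_neighborSet] at hu
      have huw : ∀ j ≤ m, w j ≠ u := by
        rintro j hj rfl
        rcases hw.chord hG (by omega) hj hu with rfl | rfl
        · exact hne (Or.inr rfl)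
        · exact hne (Or.inl rfl)
      obtain ⟨S', h1, h2⟩ := Reach.round hw h (fun j h1 h2 => hS j h1 h2 (by omega)) hi hic hm hu huw
      have hw' := (hw.shift (i := i) (l := m - i) (by omega)).cons (u := u) hu.symm
        (fun j hj => huw _ (by omega))
      obtain ⟨S'', h3⟩ := ih (m - i + 1) (by omega) hw' h1 (by
        rintro (_ | j) hj1 hj2 hj3
        · omega
        · exact h2 (i + j) (by omega) (by omega) (by omega))
      refine ⟨S'', ?_⟩
      have e : consSeq u (fun j => w (i + j)) (m - i + 1) = w m :=
        congrArg w (show i + (m - i) = m by omega)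
      rw [e] at h3
      refine h3.mono ?_
      rw [add_assoc, ← Nat.mul_add]
      exact Nat.add_le_add_left (Nat.mul_le_mul_left _ (by omega)) _
    · refine ⟨_, (Reach.slide hw h fun j h1 h2 => hS j h1 (by omega) h2).mono ?_⟩
      rcases Nat.eq_zero_or_pos m with rfl | h0
      · simp
      · nlinarith

end advance

end PMT

/-- Procedure A (Case A of the CATERPILLAR algorithm): if the component of
`T − r` containing `t` has at least `c(T)` holes, the marked pebble can be brought to `t`
in at most `C·n·c(T)` moves, for a universal constant `C`. -/
theorem procedure_A :
    ∃ C : ℕ, 0 < C ∧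
      ∀ (V P H : Type) [Fintype V] [Fintype P] [Fintype H] (G : SimpleGraph V),
        G.IsTree →
        Fintype.card V = Fintype.card P + Fintype.card H →
        PMT.cT G ≤ Fintype.card H →
        ∀ (A : PMT.Config P H V) (pb : P) (t : V),
          t ≠ A (Sum.inl pb) →
          PMT.cT G ≤ PMT.holesInComp G A (A (Sum.inl pb)) t →
          ∃ (f : List (V × V)) (B : PMT.Config P H V),
            PMT.applyPlan G A f = some B ∧
            f.length ≤ C * Fintype.card V * PMT.cT G ∧
            B (Sum.inl pb) = t := by
  refine ⟨7, by norm_num, ?_⟩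
  intro V P H _ _ _ G hT _ _ A pb t htr hc
  obtain ⟨r, hr⟩ : ∃ r, r = A (Sum.inl pb) := ⟨_, rfl⟩
  rw [← hr] at htr hc
  classical
  obtain ⟨p, hp⟩ := hT.connected.exists_isPath r t
  have hw := PMT.isSeq_getVert hp
  have h0 : PMT.Reach G A pb 0 r {v | (A.symm v).isRight = true} :=
    ⟨[], A, rfl, le_rfl, hr.symm, fun v => Iff.rfl⟩
  have hKN : (p.getVert '' Set.Icc 1 (min (PMT.cT G) p.length)).ncard ≤ PMT.cT G := by
    refine (Set.ncard_image_le (Set.finite_Icc _ _)).trans ?_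
    rw [← Finset.coe_Icc, Set.ncard_coe_finset, Nat.card_Icc]
    omega
  -- `D` is the component of `T - r` containing `t`; its holes are gathered in front of `r`.
  obtain ⟨S, h1, hS⟩ := PMT.Reach.clear
    (D := {x | ∃ q : G.Walk x t, r ∉ q.support})
    (K := p.getVert '' Set.Icc 1 (min (PMT.cT G) p.length)) (l := Fintype.card V)
    (by
      rintro _ ⟨j, ⟨hj1, hj2⟩, rfl⟩
      refine ⟨p.drop j, fun hmem => ?_⟩
      obtain ⟨i, hi, hi'⟩ := SimpleGraph.Walk.mem_support_iff_exists_getVert.1 hmem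
      rw [SimpleGraph.Walk.drop_getVert] at hi
      rw [SimpleGraph.Walk.drop_length] at hi'
      have := hw.inj _ (by omega) 0 (by omega) (hi.trans p.getVert_zero.symm)
      omega)
    (by
      rintro a ⟨qa, ha⟩ b ⟨qb, hb⟩
      refine ⟨(qa.append qb.reverse).bypass, fun hmem => ?_,
        (SimpleGraph.Walk.bypass_isPath _).length_lt.le⟩
      have := SimpleGraph.Walk.support_bypass_subset_support _ hmem
      rw [SimpleGraph.Walk.mem_support_append_iff, SimpleGraph.Walk.support_reverse,
        List.mem_reverse] at this
      tauto)
    (PMT.cT G) h0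
    ((Set.ncard_le_ncard Set.sdiff_subset (Set.toFinite _)).trans hKN)
    (by
      refine hKN.trans (hc.trans (le_of_eq ?_))
      rw [PMT.holesInComp, ← Set.ncard_coe_finset]
      congr 1
      ext x
      simp [and_comm])
  obtain ⟨S', f, B, hf1, hf2, hf3, -⟩ := PMT.Reach.advance hT.isAcyclic p.length hw
    (by rw [p.getVert_zero]; exact h1)
    (fun j hj1 hj2 hj3 => hS ⟨j, ⟨hj1, by omega⟩, rfl⟩)
  refine ⟨f, B, hf1, hf2.trans ?_, by rw [hf3, p.getVert_length]⟩
  have := Nat.mul_le_mul_left (6 * PMT.cT G) hw.length_lt.le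
  nlinarith
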